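/- Let M and N be matroids without coloops with rk(M) = rk(N), and take S_M = C(M) and S_N = C(N) to be their collections of circuits. If the isomorphism algebra 𝔄•(M,N,C) is nonzero, then M is paving if and only if N is paving. -/

import Mathlib

open scoped BigOperators TensorProduct

namespace MatroidGame

/-- A "pre-matroid": a finite ground set together with a distinguished collection of
finsets (intended to be the bases). -/
structure PreMatroid (α : Type*) where
  E : Finset α
  bases : Finset (Finset α)

namespace PreMatroid

variable {α : Type*} [DecidableEq α]

/-- The paper's definition of a matroid: a nonempty collection of `r`-element subsets of the
ground set satisfying the basis exchange axiom. -/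
def IsMatroid (M : PreMatroid α) : Prop :=
  M.bases.Nonempty ∧
    (∀ B ∈ M.bases, B ⊆ M.E) ∧
    (∀ B₁ ∈ M.bases, ∀ B₂ ∈ M.bases, B₁.card = B₂.card) ∧
    (∀ B₁ ∈ M.bases, ∀ B₂ ∈ M.bases, ∀ a ∈ B₁ \ B₂,
      ∃ b ∈ B₂ \ B₁, insert b (B₁.erase a) ∈ M.bases)

/-- A set is independent if it is contained in a basis. -/
def Indep (M : PreMatroid α) (I : Finset α) : Prop :=
  ∃ B ∈ M.bases, I ⊆ B

instance (M : PreMatroid α) : DecidablePred M.Indep := fun I =>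
  inferInstanceAs (Decidable (∃ B ∈ M.bases, I ⊆ B))

/-- The rank of a subset: the maximal size of an independent subset of it. -/
def rkSet (M : PreMatroid α) (X : Finset α) : ℕ :=
  (X.powerset.filter fun I => M.Indep I).sup Finset.card

/-- The rank of the matroid. -/
def rk (M : PreMatroid α) : ℕ := M.rkSet M.E

/-- A circuit is a minimal dependent subset of the ground set. -/
def Circuit (M : PreMatroid α) (C : Finset α) : Prop :=
  C ⊆ M.E ∧ ¬M.Indep C ∧ ∀ D ⊂ C, M.Indep D

/-- A matroid is paving if every circuit has size at least the rank. -/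
def Paving (M : PreMatroid α) : Prop := ∀ C, M.Circuit C → M.rk ≤ C.card

/-- The dual matroid: bases are complements of bases. -/
def dual (M : PreMatroid α) : PreMatroid α := ⟨M.E, M.bases.image fun B => M.E \ B⟩

/-- A matroid is sparse paving if both it and its dual are paving. -/
def SparsePaving (M : PreMatroid α) : Prop := M.Paving ∧ M.dual.Paving

/-- The closure of a set. -/
def cl (M : PreMatroid α) (X : Finset α) : Finset α :=
  M.E.filter fun b => M.rkSet (insert b X) = M.rkSet X

/-- A flat is a closed subset. -/
def IsFlat (M : PreMatroid α) (F : Finset α) : Prop := F ⊆ M.E ∧ M.cl F = F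

/-- A hyperplane is a flat of rank `rk M - 1`. -/
def IsHyperplane (M : PreMatroid α) (H : Finset α) : Prop :=
  M.IsFlat H ∧ M.rkSet H = M.rk - 1

/-- A cyclic hyperplane is a hyperplane which is a union of circuits. -/
def IsCyclicHyperplane (M : PreMatroid α) (H : Finset α) : Prop :=
  M.IsHyperplane H ∧ ∀ x ∈ H, ∃ C, M.Circuit C ∧ C ⊆ H ∧ x ∈ C

/-- A loop is a ground set element contained in no basis. -/
def IsLoop (M : PreMatroid α) (a : α) : Prop := a ∈ M.E ∧ ∀ B ∈ M.bases, a ∉ B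

/-- A coloop is a ground set element contained in every basis. -/
def IsColoop (M : PreMatroid α) (a : α) : Prop := a ∈ M.E ∧ ∀ B ∈ M.bases, a ∈ B

def Loopless (M : PreMatroid α) : Prop := ∀ a, ¬M.IsLoop a

/-- A matroid is simple if it has no loops and every rank-1 subset is a singleton. -/
def Simple (M : PreMatroid α) : Prop :=
  M.Loopless ∧ ∀ X ⊆ M.E, M.rkSet X = 1 → X.card = 1

/-- The restriction `M | Y`: its independent sets are the independent sets of `M` contained
in `Y`, and its bases are the maximal such sets. -/
def restrict (M : PreMatroid α) (Y : Finset α) : PreMatroid α :=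
  ⟨Y, Y.powerset.filter fun B =>
      M.Indep B ∧ ∀ I ∈ Y.powerset, M.Indep I → B ⊆ I → I = B⟩

/-- `M` is the free extension of `N` by the new element `e`. -/
def IsFreeExtension (M N : PreMatroid α) (e : α) : Prop :=
  e ∉ N.E ∧ M.E = insert e N.E ∧
    ∀ B : Finset α, B ∈ M.bases ↔
      (B ∈ N.bases ∨ ∃ A : Finset α, N.Indep A ∧ A.card = N.rk - 1 ∧ B = insert e A)

/-- The uniform matroid of rank `k` on the ground set `E`. -/
def uniform {β : Type*} (E : Finset β) (k : ℕ) : PreMatroid β := ⟨E, E.powersetCard k⟩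

/-- The direct sum of two matroids. -/
def directSum {β γ : Type*} [DecidableEq β] [DecidableEq γ] (M : PreMatroid β)
    (N : PreMatroid γ) : PreMatroid (β ⊕ γ) :=
  ⟨M.E.map ⟨Sum.inl, Sum.inl_injective⟩ ∪ N.E.map ⟨Sum.inr, Sum.inr_injective⟩,
    (M.bases ×ˢ N.bases).image fun p =>
      p.1.map ⟨Sum.inl, Sum.inl_injective⟩ ∪ p.2.map ⟨Sum.inr, Sum.inr_injective⟩⟩

/-- `φ` realizes an isomorphism of matroids: it is a bijection of the ground sets such that a
subset of the ground set is a basis iff its image is a basis. -/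
def IsIsoMap {β γ : Type*} [DecidableEq γ] (M : PreMatroid β) (N : PreMatroid γ)
    (φ : β → γ) : Prop :=
  Set.BijOn φ ↑M.E ↑N.E ∧ ∀ B ⊆ M.E, (B ∈ M.bases ↔ B.image φ ∈ N.bases)

/-- Two matroids are isomorphic. -/
def Iso {β γ : Type*} [DecidableEq γ] (M : PreMatroid β) (N : PreMatroid γ) : Prop :=
  ∃ φ : β → γ, M.IsIsoMap N φ

end PreMatroid

/-- The pointed sets `S•`: pairs `(A, p)` with `A ∈ S` and `p ∈ A`. -/
abbrev PtSet {α : Type*} (S : Finset (Finset α)) : Type _ :=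
  {v : Finset α × α // v.1 ∈ S ∧ v.2 ∈ v.1}

/-- The relation `rel` on pointed sets, valued in `{0,1,2,3}`. -/
def relNum {α : Type*} [DecidableEq α] (a b : Finset α × α) : ℕ :=
  if a.1 = b.1 then (if a.2 = b.2 then 0 else 2) else (if a.2 = b.2 then 1 else 3)

/-- `S` covers the ground set `E` if every element of `E` lies in a member of `S`. -/
def Covers {α : Type*} (S : Finset (Finset α)) (E : Finset α) : Prop :=
  ∀ a ∈ E, ∃ A ∈ S, a ∈ A

noncomputable section

/-- The defining relations of the quantum isomorphism (magic unitary) algebra `𝔖(I,J)`. -/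
inductive MagicRel (I J : Type*) [Fintype I] [Fintype J] :
    FreeAlgebra ℂ (I × J) → FreeAlgebra ℂ (I × J) → Prop
  | idem (a : I) (x : J) :
      MagicRel I J (FreeAlgebra.ι ℂ (a, x) * FreeAlgebra.ι ℂ (a, x)) (FreeAlgebra.ι ℂ (a, x))
  | row (a : I) {x y : J} (h : x ≠ y) :
      MagicRel I J (FreeAlgebra.ι ℂ (a, x) * FreeAlgebra.ι ℂ (a, y)) 0
  | col {a b : I} (x : J) (h : a ≠ b) :
      MagicRel I J (FreeAlgebra.ι ℂ (a, x) * FreeAlgebra.ι ℂ (b, x)) 0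
  | rowSum (a : I) : MagicRel I J (∑ x : J, FreeAlgebra.ι ℂ (a, x)) 1
  | colSum (x : J) : MagicRel I J (∑ a : I, FreeAlgebra.ι ℂ (a, x)) 1

/-- The quantum isomorphism algebra `𝔖(I,J)`. -/
abbrev MagicAlgebra (I J : Type*) [Fintype I] [Fintype J] := RingQuot (MagicRel I J)

/-- The generator `u_{a x}` of `𝔖(I,J)`. -/
def magicGen (I J : Type*) [Fintype I] [Fintype J] (a : I) (x : J) : MagicAlgebra I J :=
  RingQuot.mkAlgHom ℂ (MagicRel I J) (FreeAlgebra.ι ℂ (a, x))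

/-- The defining relations of the isomorphism algebra: magic unitary relations together with
`u_{a x} u_{b y} = 0` whenever `rel(a,b) ≠ rel(x,y)`. -/
inductive IsoRel (I J : Type*) [Fintype I] [Fintype J] (rI : I → I → ℕ) (rJ : J → J → ℕ) :
    FreeAlgebra ℂ (I × J) → FreeAlgebra ℂ (I × J) → Prop
  | magic {u v : FreeAlgebra ℂ (I × J)} : MagicRel I J u v → IsoRel I J rI rJ u v
  | mismatch (a b : I) (x y : J) (h : rI a b ≠ rJ x y) :
      IsoRel I J rI rJ (FreeAlgebra.ι ℂ (a, x) * FreeAlgebra.ι ℂ (b, y)) 0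

/-- The generic isomorphism algebra for two relation-valued structures. -/
abbrev IsoAlgebra (I J : Type*) [Fintype I] [Fintype J] (rI : I → I → ℕ)
    (rJ : J → J → ℕ) :=
  RingQuot (IsoRel I J rI rJ)

/-- The generator `u_{a x}` of the isomorphism algebra. -/
def isoGen (I J : Type*) [Fintype I] [Fintype J] (rI : I → I → ℕ) (rJ : J → J → ℕ)
    (a : I) (x : J) : IsoAlgebra I J rI rJ :=
  RingQuot.mkAlgHom ℂ (IsoRel I J rI rJ) (FreeAlgebra.ι ℂ (a, x))

/-- `rel` as a function on pointed sets. -/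
abbrev ptRel {α : Type*} [DecidableEq α] (S : Finset (Finset α)) : PtSet S → PtSet S → ℕ :=
  fun a b => relNum a.val b.val

/-- The isomorphism `∗`-algebra `𝔄•(M,N,S)` associated to the matroid isomorphism game,
presented by magic unitary relations on pointed sets plus the `rel` mismatch relations. -/
abbrev MatIsoAlgebra {α β : Type*} [Fintype α] [Fintype β] [DecidableEq α] [DecidableEq β]
    (S_M : Finset (Finset α)) (S_N : Finset (Finset β)) :=
  IsoAlgebra (PtSet S_M) (PtSet S_N) (ptRel S_M) (ptRel S_N)

/-- The generator `u_{𝔞 𝔵}` of `𝔄•(M,N,S)`. -/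
def matGen {α β : Type*} [Fintype α] [Fintype β] [DecidableEq α] [DecidableEq β]
    (S_M : Finset (Finset α)) (S_N : Finset (Finset β)) (a : PtSet S_M) (x : PtSet S_N) :
    MatIsoAlgebra S_M S_N :=
  isoGen (PtSet S_M) (PtSet S_N) (ptRel S_M) (ptRel S_N) a x

end


open PreMatroid

theorem relNum_ne {α β : Type*} [DecidableEq α] [DecidableEq β] {a b : Finset α × α}
    {x y : Finset β × β} (h : ¬ (a.1 = b.1 ↔ x.1 = y.1)) : relNum a b ≠ relNum x y := by
  unfold relNum
  split_ifs <;> simp_all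

theorem card_fiber {α : Type*} [Fintype α] [DecidableEq α] (S : Finset (Finset α))
    (a : PtSet S) :
    (Finset.univ.filter fun b : PtSet S => a.1.1 = b.1.1).card = a.1.1.card := by
  refine Finset.card_bij (fun b _ => b.1.2) ?_ ?_ ?_
  · intro b hb
    have h := (Finset.mem_filter.1 hb).2
    rw [h]
    exact b.2.2
  · intro b hb c hc h
    have h1 := (Finset.mem_filter.1 hb).2
    have h2 := (Finset.mem_filter.1 hc).2
    exact Subtype.ext (Prod.ext (h1.symm.trans h2) h)
  · intro p hp
    exact ⟨⟨(a.1.1, p), a.2.1, hp⟩, by simp, rfl⟩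

section gens

variable {α β : Type*} [Fintype α] [Fintype β] [DecidableEq α] [DecidableEq β]
    (S_M : Finset (Finset α)) (S_N : Finset (Finset β))

theorem matGen_rowSum (a : PtSet S_M) : ∑ x, matGen S_M S_N a x = 1 := by
  have h := RingQuot.mkAlgHom_rel ℂ (IsoRel.magic (rI := ptRel S_M) (rJ := ptRel S_N)
    (MagicRel.rowSum (J := PtSet S_N) a))
  rw [map_sum, map_one] at h
  exact h

theorem matGen_colSum (x : PtSet S_N) : ∑ a, matGen S_M S_N a x = 1 := by
  have h := RingQuot.mkAlgHom_rel ℂ (IsoRel.magic (rI := ptRel S_M) (rJ := ptRel S_N)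
    (MagicRel.colSum (I := PtSet S_M) x))
  rw [map_sum, map_one] at h
  exact h

theorem matGen_mul (a b : PtSet S_M) (x y : PtSet S_N)
    (h : ¬ (a.1.1 = b.1.1 ↔ x.1.1 = y.1.1)) :
    matGen S_M S_N a x * matGen S_M S_N b y = 0 := by
  have h := RingQuot.mkAlgHom_rel ℂ (IsoRel.mismatch (rI := ptRel S_M) (rJ := ptRel S_N)
    a b x y (relNum_ne h))
  rw [map_mul, map_zero] at h
  exact h

theorem card_eq_of_matGen_ne (a : PtSet S_M) (x : PtSet S_N)
    (h : matGen S_M S_N a x ≠ 0) : a.1.1.card = x.1.1.card := by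
  have h1 : ∑ b ∈ Finset.univ.filter (fun b : PtSet S_M => a.1.1 = b.1.1),
      ∑ y ∈ Finset.univ.filter (fun y : PtSet S_N => x.1.1 = y.1.1),
        matGen S_M S_N a x * matGen S_M S_N b y
      = (a.1.1.card : ℂ) • matGen S_M S_N a x := by
    rw [← card_fiber S_M a, Nat.cast_smul_eq_nsmul, ← Finset.sum_const]
    refine Finset.sum_congr rfl fun b hb => ?_
    have hb := (Finset.mem_filter.1 hb).2
    conv_rhs => rw [← mul_one (matGen S_M S_N a x), ← matGen_rowSum S_M S_N b, Finset.mul_sum]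
    refine Finset.sum_subset (Finset.subset_univ _) fun y _ hy => ?_
    apply matGen_mul
    simp at hy
    tauto
  have h2 : ∑ b ∈ Finset.univ.filter (fun b : PtSet S_M => a.1.1 = b.1.1),
      ∑ y ∈ Finset.univ.filter (fun y : PtSet S_N => x.1.1 = y.1.1),
        matGen S_M S_N a x * matGen S_M S_N b y
      = (x.1.1.card : ℂ) • matGen S_M S_N a x := by
    rw [Finset.sum_comm, ← card_fiber S_N x, Nat.cast_smul_eq_nsmul, ← Finset.sum_const]
    refine Finset.sum_congr rfl fun y hy => ?_
    have hy := (Finset.mem_filter.1 hy).2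
    conv_rhs => rw [← mul_one (matGen S_M S_N a x), ← matGen_colSum S_M S_N y, Finset.mul_sum]
    refine Finset.sum_subset (Finset.subset_univ _) fun b _ hb => ?_
    apply matGen_mul
    simp at hb
    tauto
  exact Nat.cast_injective (smul_left_injective ℂ h (h1.symm.trans h2))

end gens

theorem circuit_nonempty {α : Type*} [DecidableEq α] {M : PreMatroid α} (hM : M.IsMatroid)
    {C : Finset α} (hC : M.Circuit C) : C.Nonempty := by
  rw [Finset.nonempty_iff_ne_empty]
  rintro rfl
  obtain ⟨B, hB⟩ := hM.1
  exact hC.2.1 ⟨B, hB, Finset.empty_subset _⟩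

theorem stmt12 {α β : Type*} [Fintype α] [Fintype β] [DecidableEq α] [DecidableEq β]
    (M : PreMatroid α) (N : PreMatroid β) (hM : M.IsMatroid) (hN : N.IsMatroid)
    (hCM : ∀ a, ¬M.IsColoop a) (hCN : ∀ a, ¬N.IsColoop a)
    (hrk : M.rk = N.rk)
    (S_M : Finset (Finset α)) (S_N : Finset (Finset β))
    (hSM : ∀ C, C ∈ S_M ↔ M.Circuit C) (hSN : ∀ C, C ∈ S_N ↔ N.Circuit C)
    (hnz : Nontrivial (MatIsoAlgebra S_M S_N)) :
    M.Paving ↔ N.Paving := by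
  constructor
  · intro h D hD
    obtain ⟨p, hp⟩ := circuit_nonempty hN hD
    have hs := matGen_colSum S_M S_N ⟨(D, p), (hSN D).2 hD, hp⟩
    obtain ⟨a, -, ha⟩ := Finset.exists_ne_zero_of_sum_ne_zero (hs.trans_ne one_ne_zero)
    have hc := card_eq_of_matGen_ne S_M S_N _ _ ha
    have := h _ ((hSM _).1 a.2.1)
    simp only at hc
    omega
  · intro h D hD
    obtain ⟨p, hp⟩ := circuit_nonempty hM hD
    have hs := matGen_rowSum S_M S_N ⟨(D, p), (hSM D).2 hD, hp⟩
    obtain ⟨a, -, ha⟩ := Finset.exists_ne_zero_of_sum_ne_zero (hs.trans_ne one_ne_zero)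
    have hc := card_eq_of_matGen_ne S_M S_N _ _ ha
    have := h _ ((hSN _).1 a.2.1)
    simp only at hc
    omega
end MatroidGame
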